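/- On the responsive domain ℛ, the generalized Top Trading Cycles rule TTC is not obviously manipulable: for every responsive profile P, every agent i, and every P'_i ∈ ℛ_i such that TTC_i(P'_i, P_{-i}) P_i TTC_i(P), both (i) B_{P_i}(𝒪_i(P_i)) R_i B_{P_i}(𝒪_i(P'_i)) and (ii) W_{P_i}(𝒪_i(P_i)) R_i W_{P_i}(𝒪_i(P'_i)) hold. -/

import Mathlib

attribute [local instance] Classical.propDecidable

namespace Realloc

/-- A strict preference over bundles: a strict total order on `Finset O`. -/
structure Pref (O : Type) : Type where
  strict : Finset O → Finset O → Prop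
  total : ∀ X Y : Finset O, strict X Y ∨ X = Y ∨ strict Y X
  irrefl : ∀ X : Finset O, ¬ strict X X
  trans : ∀ X Y Z : Finset O, strict X Y → strict Y Z → strict X Z

/-- The weak ("at least as good as") relation associated with a strict preference. -/
def Pref.weak {O : Type} (p : Pref O) (X Y : Finset O) : Prop :=
  p.strict X Y ∨ X = Y

/-- An allocation: nonempty pairwise disjoint bundles whose union is all of `O`. -/
structure Allocation (N O : Type) : Type where
  bundle : N → Finset O
  nonempty : ∀ i : N, (bundle i).Nonempty
  disj : ∀ i j : N, i ≠ j → ∀ o : O, o ∈ bundle i → o ∉ bundle j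
  cover : ∀ o : O, ∃ i : N, o ∈ bundle i

variable {N O : Type}

/-- Two preferences induce the same marginal (singleton) ranking over objects. -/
def MargEq (p q : Pref O) : Prop :=
  ∀ x y : O, p.strict {x} {y} ↔ q.strict {x} {y}

/-- Responsive preferences. -/
def Responsive [DecidableEq O] (p : Pref O) : Prop :=
  ∀ (X : Finset O) (y z : O), y ∉ X → z ∉ X →
    (p.strict (insert y X) (insert z X) ↔ p.strict {y} {z})

/-- Lexicographic preferences: `X` is preferred to `Y` iff the best object of the
symmetric difference belongs to `X`. -/
def Lexicographic [DecidableEq O] (p : Pref O) : Prop :=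
  ∀ X Y : Finset O, X ≠ Y →
    (p.strict X Y ↔
      ∃ x ∈ X \ Y, ∀ y ∈ (X \ Y) ∪ (Y \ X), y ≠ x → p.strict {x} {y})

/-- Conditionally lexicographic preferences. -/
def CondLex [DecidableEq O] (p : Pref O) : Prop :=
  ∀ X Y : Finset O, Disjoint X Y → X.Nonempty →
    ∃! x : O, x ∈ X ∧ ∀ Z : Finset O, Z ⊆ X.erase x → p.strict (insert x Y) (Y ∪ Z)

/-- Monotonic preferences. -/
def Monot (p : Pref O) : Prop :=
  ∀ X Y : Finset O, Y ⊆ X → p.weak X Y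

/-- `p'` is a subset-drop strategy for `p` (relative to endowment `ωi`):
some set `X ⊆ O ∖ ωi` is moved to the bottom of the marginal ranking, preserving
the relative marginal order within `X` and within its complement. -/
def SubsetDropStrategy (ωi : Finset O) (p p' : Pref O) : Prop :=
  ∃ X : Set O, (∀ x ∈ X, x ∉ ωi) ∧
    (∀ x ∈ X, ∀ y ∈ X, (p.strict {x} {y} ↔ p'.strict {x} {y})) ∧
    (∀ x ∉ X, ∀ y ∉ X, (p.strict {x} {y} ↔ p'.strict {x} {y})) ∧
    (∀ x ∈ X, ∀ y ∉ X, p'.strict {y} {x})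

/-- `p'` is a drop strategy for `p`: a single object `x ∉ ωi` is moved to the bottom. -/
def DropStrategy (ωi : Finset O) (p p' : Pref O) : Prop :=
  ∃ x : O, x ∉ ωi ∧
    (∀ u v : O, u ≠ x → v ≠ x → (p.strict {u} {v} ↔ p'.strict {u} {v})) ∧
    (∀ y : O, y ≠ x → p'.strict {y} {x})

/-- `p'` is a truncation strategy for `p`: the tail set
`{o ∈ O ∖ ωi : {x} R {o}}` (for some object `x`) is moved to the bottom. -/
def TruncationStrategy (ωi : Finset O) (p p' : Pref O) : Prop :=
  ∃ x : O,
    (∀ u v : O, (u ∉ ωi ∧ p.weak {x} {u}) → (v ∉ ωi ∧ p.weak {x} {v}) →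
      (p.strict {u} {v} ↔ p'.strict {u} {v})) ∧
    (∀ u v : O, ¬(u ∉ ωi ∧ p.weak {x} {u}) → ¬(v ∉ ωi ∧ p.weak {x} {v}) →
      (p.strict {u} {v} ↔ p'.strict {u} {v})) ∧
    (∀ u v : O, (u ∉ ωi ∧ p.weak {x} {u}) → ¬(v ∉ ωi ∧ p.weak {x} {v}) →
      p'.strict {v} {u})

/-- There is a Pareto-improving trading cycle at the assignment `μ`:
a cyclic sequence of `k+1 ≥ 1` distinct objects and distinct agents, each object owned
(at `μ`) by its agent, such that every agent on the cycle strictly gains by swapping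
the object she relinquishes for the object she points to. -/
def ParetoImprovingCycleAt [DecidableEq O] (pref : N → Pref O) (μ : N → Finset O) : Prop :=
  ∃ (k : ℕ) (obj : Fin (k + 1) → O) (ag : Fin (k + 1) → N),
    Function.Injective obj ∧ Function.Injective ag ∧
    (∀ ℓ : Fin (k + 1), obj ℓ ∈ μ (ag ℓ)) ∧
    (∀ ℓ : Fin (k + 1),
      (pref (ag ℓ)).strict ((insert (obj (ℓ + 1)) (μ (ag ℓ))).erase (obj ℓ)) (μ (ag ℓ)))

/-- Individual-good efficiency of an assignment at a profile. -/
def IGEat [DecidableEq O] (pref : N → Pref O) (μ : N → Finset O) : Prop :=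
  ¬ ParetoImprovingCycleAt pref μ

/-- `ν` Pareto dominates `μ` at the profile `pref`. -/
def ParetoDominates (pref : N → Pref O) (ν μ : N → Finset O) : Prop :=
  (∀ i, (pref i).weak (ν i) (μ i)) ∧ ∃ j, (pref j).strict (ν j) (μ j)

/-- Pareto efficiency of an assignment at a profile. -/
def ParetoEffAt (pref : N → Pref O) (μ : N → Finset O) : Prop :=
  ∀ ν : Allocation N O, ¬ ParetoDominates pref ν.bundle μ

/-- The marginally most-preferred object of a (nonempty) finite set of objects. -/
noncomputable def Pref.best [Nonempty O] (p : Pref O) (S : Finset O) : O :=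
  if h : ∃ x : O, x ∈ S ∧ ∀ y ∈ S, p.weak {x} {y} then h.choose
  else Classical.arbitrary O

/-- The conditionally most-preferred object of `S` given the already-held bundle `Y`. -/
noncomputable def Pref.cbest [Nonempty O] [DecidableEq O] (p : Pref O) (S Y : Finset O) : O :=
  if h : ∃ x : O, x ∈ S ∧ ∀ Z : Finset O, Z ⊆ S.erase x → p.strict (insert x Y) (Y ∪ Z)
  then h.choose else Classical.arbitrary O

/-- The initial owner of an object. -/
noncomputable def Allocation.owner (ω : Allocation N O) (o : O) : N :=
  (ω.cover o).choose

/-- One pass of the generalized TTC algorithm, with fuel.  At each step every agent points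
to her marginally best remaining object and every remaining object points to its owner;
the objects lying on cycles of this functional graph (the periodic points of `g`) are
traded: the owner of a cycling object receives the object she points to. -/
noncomputable def TTCaux [Nonempty O] [DecidableEq O] (pref : N → Pref O) (own : O → N) :
    ℕ → Finset O → N → Finset O
  | 0, _, _ => ∅
  | fuel + 1, S, i =>
      let g : O → O := fun o => (pref (own o)).best S
      let C : Finset O := S.filter fun o => ∃ k : ℕ, 0 < k ∧ g^[k] o = o
      if S.Nonempty then
        ((C.filter fun o => own o = i).image g) ∪ TTCaux pref own fuel (S \ C) i
      else ∅

/-- The generalized Top Trading Cycles rule: the bundle received by agent `i`. -/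
noncomputable def TTC [Fintype O] [Nonempty O] [DecidableEq O]
    (pref : N → Pref O) (ω : Allocation N O) (i : N) : Finset O :=
  TTCaux pref ω.owner (Fintype.card O + 1) Finset.univ i

/-- One pass of the Augmented TTC algorithm, with fuel: agents point to their
conditionally most-preferred remaining object given the bundle assigned so far. -/
noncomputable def ATTCaux [Nonempty O] [DecidableEq O] (pref : N → Pref O) (own : O → N) :
    ℕ → Finset O → (N → Finset O) → N → Finset O
  | 0, _, μ => μ
  | fuel + 1, S, μ =>
      let g : O → O := fun o => (pref (own o)).cbest S (μ (own o))
      let C : Finset O := S.filter fun o => ∃ k : ℕ, 0 < k ∧ g^[k] o = o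
      if S.Nonempty then
        ATTCaux pref own fuel (S \ C) (fun j => μ j ∪ ((C.filter fun o => own o = j).image g))
      else μ

/-- The Augmented Top Trading Cycles rule: the bundle received by agent `i`. -/
noncomputable def ATTC [Fintype O] [Nonempty O] [DecidableEq O]
    (pref : N → Pref O) (ω : Allocation N O) (i : N) : Finset O :=
  ATTCaux pref ω.owner (Fintype.card O + 1) Finset.univ (fun _ => ∅) i

/-- Conditional marginal preference of `p` given the bundle `Y`:
`x` is conditionally better than `y`. -/
def CMarg [DecidableEq O] (p : Pref O) (Y : Finset O) (x y : O) : Prop :=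
  p.strict ((insert x Y).erase y) ((insert y Y).erase x)

/-- Weak conditional marginal preference. -/
def CMargWeak [DecidableEq O] (p : Pref O) (Y : Finset O) (x y : O) : Prop :=
  CMarg p Y x y ∨ x = y

/-- Drop strategy on the conditionally lexicographic domain: `x ∉ ωi` becomes the worst,
with preferences over bundles avoiding `x` unchanged. -/
def DropStrategyCL (ωi : Finset O) (p p' : Pref O) : Prop :=
  ∃ x : O, x ∉ ωi ∧
    (∀ Y : Finset O, Y.Nonempty → x ∉ Y → p'.strict Y {x}) ∧
    (∀ Y Z : Finset O, x ∉ Y → x ∉ Z → (p'.strict Y Z ↔ p.strict Y Z))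

section Rules

variable [DecidableEq O]

/-- Balancedness of a rule on the domain `D`. -/
def RBAL (D : Pref O → Prop) (ω : Allocation N O)
    (φ : (N → Pref O) → Allocation N O) : Prop :=
  ∀ P : N → Pref O, (∀ i, D (P i)) → ∀ i, ((φ P).bundle i).card = (ω.bundle i).card

/-- Individual-good efficiency of a rule on the domain `D`. -/
def RIGE (D : Pref O → Prop) (φ : (N → Pref O) → Allocation N O) : Prop :=
  ∀ P : N → Pref O, (∀ i, D (P i)) → IGEat P ((φ P).bundle)

/-- Pareto efficiency of a rule on the domain `D`. -/
def RPE (D : Pref O → Prop) (φ : (N → Pref O) → Allocation N O) : Prop :=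
  ∀ P : N → Pref O, (∀ i, D (P i)) → ParetoEffAt P ((φ P).bundle)

/-- Individual rationality of a rule on the domain `D`. -/
def RIR (D : Pref O → Prop) (ω : Allocation N O)
    (φ : (N → Pref O) → Allocation N O) : Prop :=
  ∀ P : N → Pref O, (∀ i, D (P i)) → ∀ i, (P i).weak ((φ P).bundle i) (ω.bundle i)

/-- The worst-endowment lower bound of a rule on the domain `D`: no agent receives an
object marginally worse than the marginally worst object of her endowment. -/
def RWELB (D : Pref O → Prop) (ω : Allocation N O)
    (φ : (N → Pref O) → Allocation N O) : Prop :=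
  ∀ P : N → Pref O, (∀ i, D (P i)) → ∀ i, ∀ o ∈ (φ P).bundle i,
    ∀ w ∈ ω.bundle i, (∀ y ∈ ω.bundle i, (P i).weak {y} {w}) → (P i).weak {o} {w}

/-- Marginality of a rule on the domain `D`. -/
def RMAR (D : Pref O → Prop) (φ : (N → Pref O) → Allocation N O) : Prop :=
  ∀ P P' : N → Pref O, (∀ i, D (P i)) → (∀ i, D (P' i)) →
    (∀ i, MargEq (P i) (P' i)) → ∀ i, (φ P).bundle i = (φ P').bundle i

variable [DecidableEq N]

/-- Truncation-proofness of a rule on the domain `D`. -/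
def RTP (D : Pref O → Prop) (ω : Allocation N O)
    (φ : (N → Pref O) → Allocation N O) : Prop :=
  ∀ P : N → Pref O, (∀ i, D (P i)) → ∀ i : N, ∀ p' : Pref O, D p' →
    TruncationStrategy (ω.bundle i) (P i) p' →
    (P i).weak ((φ P).bundle i) ((φ (Function.update P i p')).bundle i)

/-- Drop strategy-proofness of a rule on the domain `D`. -/
def RDSP (D : Pref O → Prop) (ω : Allocation N O)
    (φ : (N → Pref O) → Allocation N O) : Prop :=
  ∀ P : N → Pref O, (∀ i, D (P i)) → ∀ i : N, ∀ p' : Pref O, D p' →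
    DropStrategy (ω.bundle i) (P i) p' →
    (P i).weak ((φ P).bundle i) ((φ (Function.update P i p')).bundle i)

/-- Subset-drop strategy-proofness of a rule on the domain `D`. -/
def RSDSP (D : Pref O → Prop) (ω : Allocation N O)
    (φ : (N → Pref O) → Allocation N O) : Prop :=
  ∀ P : N → Pref O, (∀ i, D (P i)) → ∀ i : N, ∀ p' : Pref O, D p' →
    SubsetDropStrategy (ω.bundle i) (P i) p' →
    (P i).weak ((φ P).bundle i) ((φ (Function.update P i p')).bundle i)

/-- Worst-endowment lower bound on the conditionally lexicographic domain, formulated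
with conditional marginal preferences. -/
def RWELBCL (D : Pref O → Prop) (ω : Allocation N O)
    (φ : (N → Pref O) → Allocation N O) : Prop :=
  ∀ P : N → Pref O, (∀ i, D (P i)) → ∀ i, ∀ o ∈ (φ P).bundle i,
    ∀ w ∈ ω.bundle i,
      (∀ y ∈ ω.bundle i, CMargWeak (P i) ((φ P).bundle i) y w) →
      CMargWeak (P i) ((φ P).bundle i) o w

/-- Drop strategy-proofness on the conditionally lexicographic domain. -/
def RDSPCL (D : Pref O → Prop) (ω : Allocation N O)
    (φ : (N → Pref O) → Allocation N O) : Prop :=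
  ∀ P : N → Pref O, (∀ i, D (P i)) → ∀ i : N, ∀ p' : Pref O, D p' →
    DropStrategyCL (ω.bundle i) (P i) p' →
    (P i).weak ((φ P).bundle i) ((φ (Function.update P i p')).bundle i)

end Rules

/-- Agent `i`'s opportunity set under TTC when reporting `p`: the set of bundles
she may receive as others' (responsive) reports vary. -/
def Opp [Fintype O] [Nonempty O] [DecidableEq O] (ω : Allocation N O) (i : N)
    (p : Pref O) : Set (Finset O) :=
  {A | ∃ Q : N → Pref O, (∀ j, Responsive (Q j)) ∧ Q i = p ∧ TTC Q ω i = A}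

/-!
Let every object trade on behalf of its owner. A run of TTC is then a permutation `t` of the
objects together with rounds such that `o` and `t o` are traded in the same round and every object
that `o` prefers to `t o` has left in an earlier round. In particular every trader receives
something at least as good as itself. Hence every opportunity of agent `i` has as many objects as
her endowment and, by responsiveness, is at least as good for her.

Both bounds are attained by letting all other agents share one extreme preference. If they favour
the objects outside the endowment of `i`, they trade among themselves and `i` keeps her endowment
whatever she reports, which settles the worst bundles. If they favour the endowment of `i`, and
within it the objects she likes least, then under truth-telling she receives her most preferred
objects, as many as she owns; this beats every bundle of the same size, which settles the best
bundles.
-/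

namespace Pref

variable (p : Pref O)

theorem weak_refl (X : Finset O) : p.weak X X :=
  Or.inr rfl

variable {p} {X Y Z : Finset O}

theorem weak_trans (hXY : p.weak X Y) (hYZ : p.weak Y Z) : p.weak X Z := by
  rcases hXY with hXY | rfl
  · rcases hYZ with hYZ | rfl
    · exact Or.inl (p.trans _ _ _ hXY hYZ)
    · exact Or.inl hXY
  · exact hYZ

theorem not_strict_iff_weak : ¬ p.strict X Y ↔ p.weak Y X := by
  constructor
  · rcases p.total X Y with h | rfl | h
    · exact fun hn => absurd h hn
    · exact fun _ => p.weak_refl X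
    · exact fun _ => Or.inl h
  · rintro (h | rfl) h'
    · exact p.irrefl _ (p.trans _ _ _ h h')
    · exact p.irrefl _ h'

theorem strict_of_strict_of_weak (hXY : p.strict X Y) (hYZ : p.weak Y Z) : p.strict X Z := by
  rcases hYZ with hYZ | rfl
  · exact p.trans _ _ _ hXY hYZ
  · exact hXY

theorem weak_antisymm (hXY : p.weak X Y) (hYX : p.weak Y X) : X = Y :=
  hXY.resolve_left (not_strict_iff_weak.2 hYX)

variable (p)

/-- The ranking of single objects by a preference as a linear order, with better objects larger;
it gives access to the extremal-element lemmas for linear orders. -/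
noncomputable abbrev marginalOrder : LinearOrder O where
  le x y := p.weak {y} {x}
  lt x y := p.strict {y} {x}
  le_refl _ := p.weak_refl _
  le_trans _ _ _ hxy hyz := weak_trans hyz hxy
  le_antisymm _ _ hxy hyx := Finset.singleton_injective (weak_antisymm hyx hxy)
  lt_iff_le_not_ge _ _ := by
    rw [← not_strict_iff_weak, ← not_strict_iff_weak, not_not, iff_and_self]
    exact fun h => not_strict_iff_weak.2 (Or.inl h)
  le_total x y := (em (p.strict {x} {y})).symm.imp not_strict_iff_weak.1 Or.inl
  toDecidableLE := Classical.decRel _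

theorem best_spec [Nonempty O] {S : Finset O} (hS : S.Nonempty) :
    p.best S ∈ S ∧ ∀ y ∈ S, p.weak {p.best S} {y} := by
  have h : ∃ x ∈ S, ∀ y ∈ S, p.weak {x} {y} :=
    let _ := p.marginalOrder
    ⟨S.max' hS, S.max'_mem hS, S.le_max'⟩
  rw [Pref.best, dif_pos h]
  exact h.choose_spec

/-- The preference ranking all bundles in the opposite way. -/
def reverse : Pref O where
  strict X Y := p.strict Y X
  total X Y := (p.total Y X).imp_right (Or.imp_left Eq.symm)
  irrefl := p.irrefl
  trans _ _ _ hXY hYZ := p.trans _ _ _ hYZ hXY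

variable [DecidableEq O]

/-- The preference that first compares the number of objects from `F` and breaks ties by `p`; on
single objects it moves `F` to the top and otherwise agrees with `p`. -/
def favour (F : Finset O) : Pref O where
  strict X Y := (Y ∩ F).card < (X ∩ F).card ∨ (X ∩ F).card = (Y ∩ F).card ∧ p.strict X Y
  total X Y := by
    have := p.total X Y
    grind
  irrefl X := by simp [p.irrefl]
  trans X Y Z := by
    have := p.trans X Y Z
    grind

variable {p} in
theorem strict_favour_singleton {F : Finset O} {x y : O} (hx : x ∈ F)
    (hy : y ∈ F → p.strict {x} {y}) : (p.favour F).strict {x} {y} := by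
  by_cases hyF : y ∈ F
  · exact Or.inr (by simp [hx, hyF, hy hyF])
  · exact Or.inl (by simp [hx, hyF])

end Pref

namespace Responsive

variable [DecidableEq O] {p : Pref O}

theorem reverse (hp : Responsive p) : Responsive p.reverse :=
  fun X y z hy hz => hp X z y hz hy

theorem favour (hp : Responsive p) (F : Finset O) : Responsive (p.favour F) := by
  intro X y z hy hz
  have hcard {x : O} (hx : x ∉ X) :
      (insert x X ∩ F).card = (X ∩ F).card + ({x} ∩ F : Finset O).card := by
    rw [Finset.insert_eq, Finset.union_inter_distrib_right, add_comm]
    exact Finset.card_union_of_disjoint <|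
      (Finset.disjoint_singleton_left.2 hx).mono Finset.inter_subset_left Finset.inter_subset_left
  simp only [Pref.favour, hcard hy, hcard hz, hp X y z hy hz, add_lt_add_iff_left,
    add_right_inj]

theorem weak_insert (hp : Responsive p) {X : Finset O} {y z : O} (hy : y ∉ X) (hz : z ∉ X)
    (hyz : p.weak {y} {z}) : p.weak (insert y X) (insert z X) := by
  rcases hyz with hyz | hyz
  · exact Or.inl ((hp X y z hy hz).2 hyz)
  · rw [Finset.singleton_injective hyz]
    exact p.weak_refl _

-- Exchanging the worst object first keeps all intermediate bundles of full size: a later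
-- `f x` is at least as good as `x`, hence never collides with the exchanged object.
theorem weak_union_image (hp : Responsive p) {f : O → O} {A Z : Finset O}
    (hf : Set.InjOn f A) (hfA : ∀ a ∈ A, p.weak {f a} {a})
    (hZA : Disjoint Z A) (hZf : Disjoint Z (A.image f)) :
    p.weak (Z ∪ A.image f) (Z ∪ A) := by
  let _ := p.marginalOrder
  induction A using Finset.induction_on_min generalizing Z with
  | empty => exact p.weak_refl _
  | insert a s hmin ih =>
    have ha : a ∉ s := fun h => lt_irrefl a (hmin a h)
    rw [Finset.coe_insert, Set.injOn_insert (by simpa using ha)] at hf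
    simp only [Finset.forall_mem_insert, Finset.image_insert, Finset.disjoint_insert_right]
      at hfA hZA hZf
    have ha_image : a ∉ s.image f := by
      rintro h
      obtain ⟨x, hx, rfl⟩ := Finset.mem_image.1 h
      exact Pref.not_strict_iff_weak.2 (hfA.2 x hx) (hmin x hx)
    have hfa_image : f a ∉ s.image f := by simpa using hf.2
    have hexchange : p.weak (insert (f a) (Z ∪ s.image f)) (insert a (Z ∪ s.image f)) :=
      hp.weak_insert (Finset.notMem_union.2 ⟨hZf.1, hfa_image⟩)
        (Finset.notMem_union.2 ⟨hZA.1, ha_image⟩) hfA.1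
    have hrest : p.weak (insert a Z ∪ s.image f) (insert a Z ∪ s) :=
      ih hf.1 hfA.2 (Finset.disjoint_insert_left.2 ⟨ha, hZA.2⟩)
        (Finset.disjoint_insert_left.2 ⟨ha_image, hZf.2⟩)
    rw [Finset.insert_union, Finset.insert_union] at hrest
    rw [Finset.image_insert, Finset.union_insert, Finset.union_insert]
    exact Pref.weak_trans hexchange hrest

theorem weak_image (hp : Responsive p) {f : O → O} {A : Finset O} (hf : Set.InjOn f A)
    (hfA : ∀ a ∈ A, p.weak {f a} {a}) : p.weak (A.image f) A := by
  simpa using hp.weak_union_image hf hfA (Finset.disjoint_empty_left A)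
    (Finset.disjoint_empty_left _)

theorem weak_of_forall_strict (hp : Responsive p) {T B : Finset O} (hcard : T.card = B.card)
    (hT : ∀ a ∈ T, ∀ b ∉ T, p.strict {a} {b}) : p.weak T B := by
  rcases B.eq_empty_or_nonempty with rfl | ⟨b, -⟩
  · rw [Finset.card_eq_zero.1 hcard]
    exact p.weak_refl _
  have : Nonempty O := ⟨b⟩
  obtain ⟨f, hf⟩ : ∃ f : O → O, Set.BijOn f ↑(B \ T) ↑(T \ B) :=
    (B \ T).finite_toSet.exists_bijOn_of_encard_eq <| by
      simp only [Set.encard_coe_eq_coe_finsetCard, Finset.card_sdiff_comm hcard]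
  have himage : (B \ T).image f = T \ B := by
    rw [← Finset.coe_inj, Finset.coe_image, hf.image_eq]
  have hbetter : ∀ b ∈ B \ T, p.weak {f b} {b} := fun b hb =>
    Or.inl (hT _ (Finset.mem_sdiff.1 (hf.mapsTo hb)).1 b (Finset.mem_sdiff.1 hb).2)
  have hweak := hp.weak_union_image hf.injOn hbetter (Finset.disjoint_sdiff_inter B T).symm
    (by rw [himage, Finset.inter_comm]; exact (Finset.disjoint_sdiff_inter T B).symm)
  rwa [himage, Finset.inter_comm, Finset.union_comm, Finset.sdiff_union_inter,
    Finset.inter_comm, Finset.union_comm, Finset.sdiff_union_inter] at hweak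

end Responsive

/-- A top trading of the objects in `S`, each object `o` being a trader with preference `P o`: the
trader `o` receives `t o`, trading takes place in round `ρ o` among traders of the same round, and
every object that `o` prefers to `t o` has left in an earlier round. -/
structure IsTopTrade (P : O → Pref O) (S : Finset O) (t : O → O) (ρ : O → ℕ) : Prop where
  mapsTo : Set.MapsTo t S S
  injOn : Set.InjOn t S
  round_map : ∀ o ∈ S, ρ (t o) = ρ o
  round_lt : ∀ o ∈ S, ∀ x ∈ S, (P o).strict {x} {t o} → ρ x < ρ o

namespace IsTopTrade

variable {P : O → Pref O} {S A : Finset O} {t : O → O} {ρ : O → ℕ} {q : Pref O}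

theorem empty : IsTopTrade P ∅ t ρ := by
  constructor <;> simp [Set.MapsTo]

theorem weak_self (h : IsTopTrade P S t ρ) {o : O} (ho : o ∈ S) : (P o).weak {t o} {o} :=
  Pref.not_strict_iff_weak.1 fun hlt => (h.round_lt o ho o ho hlt).false

variable [DecidableEq O]

theorem image_eq (h : IsTopTrade P S t ρ) : S.image t = S :=
  Finset.eq_of_subset_of_card_le (Finset.image_subset_iff.2 h.mapsTo)
    (Finset.card_image_of_injOn h.injOn).ge

theorem card_image (h : IsTopTrade P S t ρ) (hA : A ⊆ S) : (A.image t).card = A.card :=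
  Finset.card_image_of_injOn (h.injOn.mono hA)

theorem weak_image (h : IsTopTrade P S t ρ) (hA : A ⊆ S) (hPA : ∀ o ∈ A, P o = q)
    (hq : Responsive q) : q.weak (A.image t) A :=
  hq.weak_image (h.injOn.mono hA) fun o ho => hPA o ho ▸ h.weak_self (hA ho)

theorem image_eq_self (h : IsTopTrade P S t ρ) (hA : A ⊆ S)
    (hP : ∀ o ∈ S \ A, ∀ x ∈ A, (P o).strict {o} {x}) : A.image t = A := by
  have hcompl : (S \ A).image t = S \ A := by
    refine Finset.eq_of_subset_of_card_le (Finset.image_subset_iff.2 fun o ho => ?_)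
      (h.card_image Finset.sdiff_subset).ge
    have hoS := (Finset.mem_sdiff.1 ho).1
    exact Finset.mem_sdiff.2 ⟨h.mapsTo hoS, fun hto =>
      Pref.not_strict_iff_weak.2 (h.weak_self hoS) (hP o ho _ hto)⟩
  rw [← Finset.sdiff_sdiff_eq_self hA, Finset.image_sdiff_of_injOn h.injOn Finset.sdiff_subset,
    h.image_eq, hcompl]

-- If `o ∈ A` prefers `b` to `t o`, then `b` left before `o`, to a trader outside `A`. That trader
-- ranks `A` first and opposes `q` within `A`, hence prefers `o` to `b`; so `o` left before `b`.
theorem strict_of_mem_image (h : IsTopTrade P S t ρ) (hA : A ⊆ S) (hPA : ∀ o ∈ A, P o = q)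
    (hP : ∀ o ∈ S \ A, ∀ x ∈ A, ∀ y, (y ∈ A → q.strict {y} {x}) → (P o).strict {x} {y})
    {a b : O} (ha : a ∈ A.image t) (hbS : b ∈ S) (hb : b ∉ A.image t) : q.strict {a} {b} := by
  by_contra hab
  obtain ⟨o, ho, rfl⟩ := Finset.mem_image.1 ha
  have hba : q.strict {b} {t o} := (Pref.not_strict_iff_weak.1 hab).resolve_right fun heq =>
    hb (Finset.singleton_injective heq ▸ ha)
  have hbo : q.strict {b} {o} :=
    Pref.strict_of_strict_of_weak hba (hPA o ho ▸ h.weak_self (hA ho))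
  have hround : ρ b < ρ o := h.round_lt o (hA ho) b hbS (by rwa [hPA o ho])
  obtain ⟨o', ho', rfl⟩ := Finset.mem_image.1 (h.image_eq.symm ▸ hbS)
  have ho'A : o' ∉ A := fun hA' => hb (Finset.mem_image_of_mem t hA')
  have hprefers : (P o').strict {o} {t o'} :=
    hP o' (Finset.mem_sdiff.2 ⟨ho', ho'A⟩) o ho _ fun _ => hbo
  have hround' : ρ o < ρ o' := h.round_lt o' ho' o (hA ho) hprefers
  exact (hround.trans hround').ne (h.round_map o' ho')

theorem piecewise {C : Finset O} {g : O → O} (hC : C ⊆ S) (hg : Set.BijOn g C C)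
    (hbest : ∀ o ∈ C, ∀ x ∈ S, (P o).weak {g o} {x}) (h : IsTopTrade P (S \ C) t ρ) :
    IsTopTrade P S (C.piecewise g t) (C.piecewise 0 (ρ + 1)) where
  mapsTo o ho := by
    by_cases hoC : o ∈ C
    · rw [Finset.piecewise_eq_of_mem _ _ _ hoC]
      exact hC (hg.mapsTo hoC)
    · rw [Finset.piecewise_eq_of_notMem _ _ _ hoC]
      exact (Finset.mem_sdiff.1 (h.mapsTo (Finset.mem_sdiff.2 ⟨ho, hoC⟩))).1
  injOn := by
    have hsdiff : Set.InjOn (C.piecewise g t) ↑(S \ C) := h.injOn.congr fun o ho =>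
      (Finset.piecewise_eq_of_notMem _ _ _ (Finset.mem_sdiff.1 ho).2).symm
    have hinjC : Set.InjOn (C.piecewise g t) C := hg.injOn.congr fun o ho =>
      (Finset.piecewise_eq_of_mem _ _ _ ho).symm
    rw [← Finset.union_sdiff_of_subset hC, Finset.coe_union,
      Set.injOn_union (Finset.disjoint_coe.2 Finset.disjoint_sdiff)]
    refine ⟨hinjC, hsdiff, fun x hx y hy hxy => ?_⟩
    rw [Finset.piecewise_eq_of_mem _ _ _ hx,
      Finset.piecewise_eq_of_notMem _ _ _ (Finset.mem_sdiff.1 hy).2] at hxy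
    exact (Finset.mem_sdiff.1 (h.mapsTo hy)).2 (hxy ▸ hg.mapsTo hx)
  round_map o ho := by
    by_cases hoC : o ∈ C
    · have : g o ∈ C := hg.mapsTo hoC
      simp only [Finset.piecewise_eq_of_mem, hoC, this, Pi.zero_apply]
    · have ho' : o ∈ S \ C := Finset.mem_sdiff.2 ⟨ho, hoC⟩
      have : t o ∉ C := (Finset.mem_sdiff.1 (h.mapsTo ho')).2
      simp only [Finset.piecewise_eq_of_notMem, hoC, this, not_false_eq_true, Pi.add_apply,
        Pi.one_apply, h.round_map o ho']
  round_lt o ho x hx hlt := by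
    by_cases hoC : o ∈ C
    · rw [Finset.piecewise_eq_of_mem _ _ _ hoC] at hlt
      exact absurd hlt (Pref.not_strict_iff_weak.2 (hbest o hoC x hx))
    rw [Finset.piecewise_eq_of_notMem _ _ _ hoC] at hlt
    rw [Finset.piecewise_eq_of_notMem _ _ _ hoC]
    by_cases hxC : x ∈ C
    · rw [Finset.piecewise_eq_of_mem _ _ _ hxC]
      exact Nat.succ_pos _
    · rw [Finset.piecewise_eq_of_notMem _ _ _ hxC]
      exact Nat.succ_lt_succ (h.round_lt o (Finset.mem_sdiff.2 ⟨ho, hoC⟩) x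
        (Finset.mem_sdiff.2 ⟨hx, hxC⟩) hlt)

end IsTopTrade

theorem exists_mem_periodicPts_of_mapsTo {α : Type*} {g : α → α} {S : Finset α}
    (hS : S.Nonempty) (hg : Set.MapsTo g S S) : ∃ x ∈ S, x ∈ Function.periodicPts g := by
  obtain ⟨x, hx⟩ := hS
  have hiter (k : ℕ) : g^[k] x ∈ S := hg.iterate k hx
  obtain ⟨a, b, hab, heq⟩ := S.finite_toSet.exists_lt_map_eq_of_forall_mem hiter
  refine ⟨g^[a] x, hiter a, Function.mk_mem_periodicPts (Nat.sub_pos_of_lt hab) ?_⟩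
  rw [Function.IsPeriodicPt, Function.IsFixedPt, ← Function.iterate_add_apply,
    Nat.sub_add_cancel hab.le, heq]

section Algorithm

variable [Nonempty O]

/-- The map followed in a round of TTC when the objects in `S` remain: `o` points, through its owner
with preference `P o`, to the best remaining object. -/
noncomputable def pointing (P : O → Pref O) (S : Finset O) (o : O) : O :=
  (P o).best S

/-- The objects traded in a round of TTC when the objects in `S` remain, i.e. those lying on a
trading cycle. -/
noncomputable def traded (P : O → Pref O) (S : Finset O) : Finset O :=
  {o ∈ S | o ∈ Function.periodicPts (pointing P S)}

variable {P : O → Pref O} {S : Finset O}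

theorem pointing_mem (hS : S.Nonempty) (o : O) : pointing P S o ∈ S :=
  ((P o).best_spec hS).1

theorem traded_subset : traded P S ⊆ S :=
  Finset.filter_subset _ _

theorem coe_traded (hS : S.Nonempty) : ↑(traded P S) = Function.periodicPts (pointing P S) := by
  ext o
  rw [traded, Finset.mem_coe, Finset.mem_filter, and_iff_right_iff_imp]
  intro ho
  obtain ⟨x, rfl⟩ := Function.periodicPts_subset_range ho
  exact pointing_mem hS x

theorem bijOn_traded (hS : S.Nonempty) : Set.BijOn (pointing P S) (traded P S) (traded P S) := by
  rw [coe_traded hS]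
  exact Function.bijOn_periodicPts _

theorem traded_nonempty (hS : S.Nonempty) : (traded P S).Nonempty := by
  obtain ⟨x, hx⟩ := exists_mem_periodicPts_of_mapsTo hS fun o _ => pointing_mem (P := P) hS o
  exact ⟨x, Finset.mem_filter.2 hx⟩

variable [DecidableEq O]

theorem TTCaux_empty (pref : N → Pref O) (own : O → N) (n : ℕ) (i : N) :
    TTCaux pref own n ∅ i = ∅ := by
  cases n <;> simp [TTCaux]

theorem TTCaux_succ (pref : N → Pref O) (own : O → N) (n : ℕ) (hS : S.Nonempty) (i : N) :
    TTCaux pref own (n + 1) S i =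
      {o ∈ traded (pref ∘ own) S | own o = i}.image (pointing (pref ∘ own) S) ∪
        TTCaux pref own n (S \ traded (pref ∘ own) S) i := by
  rw [TTCaux]
  exact if_pos hS

theorem exists_isTopTrade_TTCaux (pref : N → Pref O) (own : O → N) {n : ℕ} (hn : S.card ≤ n) :
    ∃ t ρ, IsTopTrade (pref ∘ own) S t ρ ∧
      ∀ i, TTCaux pref own n S i = {o ∈ S | own o = i}.image t := by
  induction n generalizing S with
  | zero =>
    obtain rfl : S = ∅ := Finset.card_eq_zero.1 (Nat.le_zero.1 hn)
    exact ⟨id, 0, .empty, fun i => by simp [TTCaux_empty]⟩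
  | succ n ih =>
    rcases S.eq_empty_or_nonempty with rfl | hS
    · exact ⟨id, 0, .empty, fun i => by simp [TTCaux_empty]⟩
    set C := traded (pref ∘ own) S
    have hC : C ⊆ S := traded_subset
    have hcard : (S \ C).card ≤ n :=
      Nat.le_of_lt_succ <|
        (Finset.card_lt_card (Finset.sdiff_ssubset hC (traded_nonempty hS))).trans_le hn
    obtain ⟨t, ρ, htrade, hbundle⟩ := ih hcard
    refine ⟨_, _, htrade.piecewise hC (bijOn_traded hS)
      fun o _ => ((pref (own o)).best_spec hS).2, fun i => ?_⟩
    have hfilter : {o ∈ S | own o = i} = {o ∈ C | own o = i} ∪ {o ∈ S \ C | own o = i} := by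
      rw [← Finset.filter_union, Finset.union_sdiff_of_subset hC]
    rw [TTCaux_succ _ _ _ hS, hbundle, hfilter, Finset.image_union]
    congr 1 <;> refine Finset.image_congr fun o ho => ?_
    · exact (Finset.piecewise_eq_of_mem _ _ _ (Finset.mem_filter.1 ho).1).symm
    · exact (Finset.piecewise_eq_of_notMem _ _ _
        (Finset.mem_sdiff.1 (Finset.mem_filter.1 ho).1).2).symm

end Algorithm

theorem Allocation.owner_eq_iff (ω : Allocation N O) {o : O} {i : N} :
    ω.owner o = i ↔ o ∈ ω.bundle i := by
  have howner : o ∈ ω.bundle (ω.owner o) := (ω.cover o).choose_spec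
  refine ⟨fun h => h ▸ howner, fun ho => ?_⟩
  by_contra hne
  exact ω.disj _ _ hne o howner ho

section Opportunities

variable [Fintype O] [Nonempty O] [DecidableEq O]

theorem exists_isTopTrade_TTC (pref : N → Pref O) (ω : Allocation N O) :
    ∃ t ρ, IsTopTrade (pref ∘ ω.owner) Finset.univ t ρ ∧
      ∀ i, TTC pref ω i = (ω.bundle i).image t := by
  obtain ⟨t, ρ, htrade, hbundle⟩ :=
    exists_isTopTrade_TTCaux pref ω.owner (Nat.le_succ (Finset.univ : Finset O).card)
  refine ⟨t, ρ, htrade, fun i => (hbundle i).trans ?_⟩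
  simp only [ω.owner_eq_iff, Finset.filter_univ_mem]

variable (ω : Allocation N O) (i : N) {p r : Pref O} {A : Finset O}

theorem card_eq_of_mem_Opp (hA : A ∈ Opp ω i p) : A.card = (ω.bundle i).card := by
  obtain ⟨Q, -, -, rfl⟩ := hA
  obtain ⟨t, ρ, htrade, hbundle⟩ := exists_isTopTrade_TTC Q ω
  rw [hbundle, htrade.card_image (Finset.subset_univ _)]

theorem weak_endowment_of_mem_Opp (hA : A ∈ Opp ω i p) : p.weak A (ω.bundle i) := by
  obtain ⟨Q, hQ, rfl, rfl⟩ := hA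
  obtain ⟨t, ρ, htrade, hbundle⟩ := exists_isTopTrade_TTC Q ω
  rw [hbundle]
  exact htrade.weak_image (Finset.subset_univ _)
    (fun o ho => congrArg Q (ω.owner_eq_iff.2 ho)) (hQ i)

theorem exists_isTopTrade_image_mem_Opp (hp : Responsive p) (hr : Responsive r) :
    ∃ t ρ, IsTopTrade ((ω.bundle i).piecewise (fun _ => p) fun _ => r) Finset.univ t ρ ∧
      (ω.bundle i).image t ∈ Opp ω i p := by
  let Q : N → Pref O := Function.update (fun _ => r) i p
  have hQ : ∀ j, Responsive (Q j) :=
    (Function.forall_update_iff _ fun _ q => Responsive q).2 ⟨hp, fun _ _ => hr⟩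
  have hpiecewise : Q ∘ ω.owner = (ω.bundle i).piecewise (fun _ => p) fun _ => r := by
    ext1 o
    simp only [Q, Function.comp_apply, Function.update_apply, ω.owner_eq_iff, Finset.piecewise]
  have hQi : Q i = p := Function.update_self ..
  obtain ⟨t, ρ, htrade, hbundle⟩ := exists_isTopTrade_TTC Q ω
  exact ⟨t, ρ, hpiecewise ▸ htrade, Q, hQ, hQi, hbundle i⟩

theorem endowment_mem_Opp (hp : Responsive p) : ω.bundle i ∈ Opp ω i p := by
  obtain ⟨t, ρ, htrade, hmem⟩ :=
    exists_isTopTrade_image_mem_Opp ω i hp (hp.favour (ω.bundle i)ᶜ)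
  rwa [htrade.image_eq_self (Finset.subset_univ _)] at hmem
  intro o ho x hx
  have hoA : o ∉ ω.bundle i := (Finset.mem_sdiff.1 ho).2
  rw [Finset.piecewise_eq_of_notMem _ _ _ hoA]
  exact Pref.strict_favour_singleton (Finset.mem_compl.2 hoA)
    fun hxA => absurd hx (Finset.mem_compl.1 hxA)

theorem exists_top_mem_Opp (hp : Responsive p) :
    ∃ T ∈ Opp ω i p, ∀ a ∈ T, ∀ b ∉ T, p.strict {a} {b} := by
  obtain ⟨t, ρ, htrade, hmem⟩ :=
    exists_isTopTrade_image_mem_Opp ω i hp (hp.reverse.favour (ω.bundle i))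
  refine ⟨_, hmem, fun a ha b hb => htrade.strict_of_mem_image (Finset.subset_univ _)
    (fun o ho => Finset.piecewise_eq_of_mem _ _ _ ho) (fun o ho x hx y hy => ?_)
    ha (Finset.mem_univ b) hb⟩
  rw [Finset.piecewise_eq_of_notMem _ _ _ (Finset.mem_sdiff.1 ho).2]
  exact Pref.strict_favour_singleton hx hy

end Opportunities

theorem stmt13_general {N O : Type} [Fintype O] [DecidableEq O] [Nonempty O]
    (ω : Allocation N O) (i : N) {p p' : Pref O} (hp : Responsive p) (hp' : Responsive p') :
    (∀ B, (∀ A ∈ Opp ω i p, p.weak B A) → ∀ A' ∈ Opp ω i p', p.weak B A') ∧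
      (∀ W, (∀ A' ∈ Opp ω i p', p.weak A' W) → ∀ A ∈ Opp ω i p, p.weak A W) := by
  constructor
  · intro B hB A' hA'
    obtain ⟨T, hT, htop⟩ := exists_top_mem_Opp ω i hp
    have hcard : T.card = A'.card :=
      (card_eq_of_mem_Opp ω i hT).trans (card_eq_of_mem_Opp ω i hA').symm
    exact Pref.weak_trans (hB T hT) (hp.weak_of_forall_strict hcard htop)
  · intro W hW A hA
    have hendowment : ω.bundle i ∈ Opp ω i p' := endowment_mem_Opp ω i hp'
    exact Pref.weak_trans (weak_endowment_of_mem_Opp ω i hA) (hW _ hendowment)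

/-- On the responsive domain, TTC is not obviously manipulable: whenever a
misreport `p'` strictly profits agent `i`, the `P i`-best bundle of her truthful
opportunity set is weakly better than the `P i`-best bundle of the misreport's
opportunity set, and likewise for the worst bundles. -/
theorem stmt13 {N O : Type} [Fintype N] [Fintype O] [DecidableEq N] [DecidableEq O] [Nonempty O]
    (hN : 2 ≤ Fintype.card N) (hNO : Fintype.card N ≤ Fintype.card O)
    (ω : Allocation N O) :
    ∀ P : N → Pref O, (∀ j, Responsive (P j)) → ∀ i : N, ∀ p' : Pref O, Responsive p' →
      (P i).strict (TTC (Function.update P i p') ω i) (TTC P ω i) →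
      ((∀ Bt ∈ Opp ω i (P i), ∀ Bm ∈ Opp ω i p',
          (∀ A ∈ Opp ω i (P i), (P i).weak Bt A) →
          (∀ A ∈ Opp ω i p', (P i).weak Bm A) →
          (P i).weak Bt Bm) ∧
       (∀ Wt ∈ Opp ω i (P i), ∀ Wm ∈ Opp ω i p',
          (∀ A ∈ Opp ω i (P i), (P i).weak A Wt) →
          (∀ A ∈ Opp ω i p', (P i).weak A Wm) →
          (P i).weak Wt Wm)) := by
  intro P hP i p' hp' _
  obtain ⟨hbest, hworst⟩ := stmt13_general ω i (hP i) hp'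
  exact ⟨fun Bt _ Bm hBm hBt _ => hbest Bt hBt Bm hBm,
    fun Wt hWt Wm _ _ hWm => hworst Wm hWm Wt hWt⟩

end Realloc
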